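/- arXiv:1004.5239 — 4 statements merged into one kernel-verified Lean document; each statement's English description precedes it below -/
import Mathlib

section
/- Let w be a word in the alphabet {X,A} beginning with the letter X. If P_w(x^2,y^2) has a factor f in Z[x,y] that is irreducible as an element of C[x,y], then w is not universal; that is, there exist a uniquely divisible group G and elements a, b in G such that the equation w(x,a) = b has no solution x in G. -/
open MvPolynomial

/-- A group is *uniquely divisible* if every element has a unique `m`-th root
for each positive integer `m`. -/
def UniquelyDivisible (G : Type*) [Group G] : Prop :=
  ∀ (b : G) (m : ℕ), 0 < m → ∃! x : G, x ^ m = b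

/-- Evaluation of a word in the alphabet `{X, A}` (encoded as a `List Bool`,
with `true` standing for the letter `X` and `false` for the letter `A`)
at elements `x` (for `X`) and `a` (for `A`) of a monoid. -/
def wordEval {M : Type*} [Monoid M] (w : List Bool) (x a : M) : M :=
  (w.map fun c => if c then x else a).prod

/-- The word polynomial `P_w ∈ ℤ[x,y]`: for
`w = A^{a_0} X A^{a_1} X ⋯ A^{a_{n-1}} X A^{a_n}` it is
`∑_{k=0}^{n-1} x^k y^{a_0 + ⋯ + a_k}`, where `x = X 0`, `y = X 1`. -/
noncomputable def wordPoly : List Bool → MvPolynomial (Fin 2) ℤ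
  | [] => 0
  | true :: w => X 0 * wordPoly w + 1
  | false :: w => X 1 * wordPoly w

/-- In a divisible abelian group, a torsion-free subgroup is contained in a
torsion-free divisible subgroup. -/
theorem exists_divisible_torsionFree {A : Type} [AddCommGroup A]
    (hA : ∀ (a : A) (m : ℕ), 0 < m → ∃ b : A, m • b = a)
    (T : AddSubgroup A) (hT : ∀ t ∈ T, ∀ m : ℕ, 0 < m → m • t = 0 → t = 0) :
    ∃ H : AddSubgroup A, T ≤ H ∧ (∀ t ∈ H, ∀ m : ℕ, 0 < m → m • t = 0 → t = 0) ∧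
      (∀ t ∈ H, ∀ m : ℕ, 0 < m → ∃ b ∈ H, m • b = t) := by
  classical
  let M : AddSubgroup A :=
    { carrier := {a | ∃ m : ℕ, 0 < m ∧ m • a = 0}
      zero_mem' := ⟨1, one_pos, by simp⟩
      add_mem' := by
        rintro a b ⟨m, hm, ha⟩ ⟨n, hn, hb⟩
        refine ⟨m * n, Nat.mul_pos hm hn, ?_⟩
        rw [smul_add, mul_comm, mul_smul, ha, mul_comm, mul_smul, hb]
        simp
      neg_mem' := by
        rintro a ⟨m, hm, ha⟩
        exact ⟨m, hm, by rw [smul_neg, ha, neg_zero]⟩ }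
  have hMdiv : ∀ (a : M) (m : ℕ), 0 < m → ∃ b : M, m • b = a := by
    rintro ⟨a, k, hk, ha⟩ m hm
    obtain ⟨b, hb⟩ := hA a m hm
    refine ⟨⟨b, k * m, Nat.mul_pos hk hm, by rw [mul_smul, hb, ha]⟩, ?_⟩
    ext
    exact hb
  have hMdivZ : ∀ (n : ℤ), n ≠ 0 → ∀ a : M, ∃ b : M, n • b = a := by
    intro n hn a
    obtain ⟨b, hb⟩ := hMdiv a n.natAbs (Int.natAbs_pos.mpr hn)
    rcases Int.natAbs_eq n with h | h
    · exact ⟨b, by rw [h, natCast_zsmul, hb]⟩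
    · exact ⟨-b, by rw [h, neg_smul, smul_neg, neg_neg, natCast_zsmul, hb]⟩
  letI : DivisibleBy M ℤ :=
    { div := fun a n => if h : n = 0 then 0 else (hMdivZ n h a).choose
      div_zero := fun a => by simp
      div_cancel := fun {n} a h => by
        simp only [dif_neg h]
        exact (hMdivZ n h a).choose_spec }
  have hB : Module.Baer ℤ M := Module.Baer.of_divisible M
  let i : (T × M) →+ A := T.subtype.coprod M.subtype
  have hi : Function.Injective i := by
    rw [injective_iff_map_eq_zero]
    rintro ⟨t, z⟩ h
    have h' : (t : A) + z = 0 := h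
    have ht : (t : A) = 0 := by
      obtain ⟨m, hm, hz⟩ := z.2
      refine hT t t.2 m hm ?_
      rw [eq_neg_of_add_eq_zero_left h', smul_neg, hz, neg_zero]
    have hz : (z : A) = 0 := by simpa [ht] using h'
    exact Prod.ext (Subtype.ext ht) (Subtype.ext hz)
  obtain ⟨r, hr⟩ := hB.extension_property_addMonoidHom i hi (AddMonoidHom.snd T M)
  have hrM : ∀ z : M, r (z : A) = z := by
    intro z
    have := DFunLike.congr_fun hr (0, z)
    simpa [i] using this
  refine ⟨r.ker, ?_, ?_, ?_⟩
  · intro t ht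
    have := DFunLike.congr_fun hr (⟨t, ht⟩, 0)
    rw [AddMonoidHom.mem_ker]
    simpa [i] using this
  · intro t ht m hm h
    have h1 := hrM ⟨t, m, hm, h⟩
    rw [AddMonoidHom.mem_ker] at ht
    have h2 := ht.symm.trans h1
    exact (congrArg Subtype.val h2).symm
  · intro t ht m hm
    obtain ⟨b, hb⟩ := hA t m hm
    have h0 : m • r b = 0 := by
      rw [← map_nsmul, hb]; exact ht
    refine ⟨b - (r b : A), ?_, ?_⟩
    · rw [AddMonoidHom.mem_ker, map_sub, hrM, sub_self]
    · rw [smul_sub, hb]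
      have : m • ((r b : M) : A) = 0 := by exact_mod_cast congrArg Subtype.val h0
      rw [this, sub_zero]

/-- Affine maps `t ↦ lin * t + tr` of a field with linear part in a group `H` of units. -/
@[ext]
structure AffMap (L : Type) [Field L] (H : Subgroup Lˣ) where
  /-- translation part -/
  tr : L
  /-- linear part -/
  lin : H

namespace AffMap

variable {L : Type} [Field L] {H : Subgroup Lˣ}

/-- The scalar attached to the linear part. -/
def sc (h : H) : L := ((h : Lˣ) : L)

@[simp] theorem sc_one : sc (1 : H) = 1 := by simp [sc]
@[simp] theorem sc_mul (h k : H) : sc (h * k) = sc h * sc k := by simp [sc]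
theorem sc_ne_zero (h : H) : sc h ≠ 0 := by simp [sc]
theorem sc_inj {h k : H} (e : sc h = sc k) : h = k := Subtype.ext (Units.ext e)
theorem sc_pow (h : H) (m : ℕ) : sc (h ^ m) = sc h ^ m := by simp [sc]

instance : Mul (AffMap L H) := ⟨fun g k => ⟨g.tr + sc g.lin * k.tr, g.lin * k.lin⟩⟩
instance : One (AffMap L H) := ⟨⟨0, 1⟩⟩
instance : Inv (AffMap L H) := ⟨fun g => ⟨-(sc g.lin⁻¹ * g.tr), g.lin⁻¹⟩⟩

@[simp] theorem mul_tr (g k : AffMap L H) : (g * k).tr = g.tr + sc g.lin * k.tr := rfl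
@[simp] theorem mul_lin (g k : AffMap L H) : (g * k).lin = g.lin * k.lin := rfl
@[simp] theorem one_tr : (1 : AffMap L H).tr = 0 := rfl
@[simp] theorem one_lin : (1 : AffMap L H).lin = 1 := rfl
@[simp] theorem inv_tr (g : AffMap L H) : (g⁻¹).tr = -(sc g.lin⁻¹ * g.tr) := rfl
@[simp] theorem inv_lin (g : AffMap L H) : (g⁻¹).lin = g.lin⁻¹ := rfl

instance : Group (AffMap L H) :=
  Group.ofLeftAxioms
    (fun a b c => by
      ext
      · simp only [mul_tr, mul_lin, sc_mul]; ring
      · simp [mul_assoc])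
    (fun a => by ext <;> simp)
    (fun a => by ext <;> simp)

theorem pow_lin (g : AffMap L H) (m : ℕ) : (g ^ m).lin = g.lin ^ m := by
  induction m with
  | zero => simp
  | succ m ih => rw [pow_succ, pow_succ, mul_lin, ih]

theorem pow_tr (g : AffMap L H) (m : ℕ) :
    (g ^ m).tr = (∑ i ∈ Finset.range m, sc g.lin ^ i) * g.tr := by
  induction m with
  | zero => simp
  | succ m ih =>
    rw [pow_succ, mul_tr, ih, pow_lin, sc_pow, Finset.sum_range_succ]; ring

theorem uniquelyDivisible [CharZero L]
    (htf : ∀ t : H, ∀ m : ℕ, 0 < m → t ^ m = 1 → t = 1)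
    (hdiv : ∀ t : H, ∀ m : ℕ, 0 < m → ∃ s : H, s ^ m = t) :
    UniquelyDivisible (AffMap L H) := by
  intro b m hm
  obtain ⟨h, hh⟩ := hdiv b.lin m hm
  have hne : (∑ i ∈ Finset.range m, sc h ^ i) ≠ 0 := by
    by_cases h1 : h = 1
    · subst h1
      simp only [sc_one, one_pow, Finset.sum_const, Finset.card_range, nsmul_eq_mul, mul_one]
      exact_mod_cast hm.ne'
    · intro h0
      have := geom_sum_mul (sc h) m
      rw [h0, zero_mul, eq_comm, sub_eq_zero, ← sc_pow, ← sc_one (H := H)] at this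
      exact h1 (htf h m hm (sc_inj this))
  refine ⟨⟨b.tr / (∑ i ∈ Finset.range m, sc h ^ i), h⟩, ?_, ?_⟩
  · ext
    · rw [pow_tr, mul_div_cancel₀ _ hne]
    · rw [pow_lin, hh]
  · intro y hy
    have hl : y.lin = h := by
      have e : y.lin ^ m = h ^ m := by rw [← pow_lin, hy, hh]
      have := htf (y.lin * h⁻¹) m hm (by rw [mul_pow, inv_pow, e, mul_inv_cancel])
      exact mul_inv_eq_one.mp this
    ext
    · rw [eq_div_iff hne, ← hy, pow_tr, hl, mul_comm]
    · simp only [hl]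

theorem wordEval_tr (w : List Bool) (g k : AffMap L H) (hk : k.tr = 0) :
    (wordEval w g k).tr = aeval ![sc g.lin, sc k.lin] (wordPoly w) * g.tr := by
  induction w with
  | nil => simp [wordEval, wordPoly]
  | cons c w ih =>
    have e : wordEval (c :: w) g k = (if c then g else k) * wordEval w g k := by
      simp [wordEval]
    rw [e, mul_tr, ih]
    cases c
    · simp [wordPoly, hk]; ring
    · simp [wordPoly]; ring

theorem wordEval_lin (w : List Bool) (g k : AffMap L H) :
    (wordEval w g k).lin = g.lin ^ (w.count true) * k.lin ^ (w.count false) := by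
  induction w with
  | nil => simp [wordEval]
  | cons c w ih =>
    have e : wordEval (c :: w) g k = (if c then g else k) * wordEval w g k := by
      simp [wordEval]
    rw [e, mul_lin, ih]
    cases c
    · simp [pow_succ]; exact mul_left_comm _ _ _ |>.trans (by rw [mul_comm k.lin])
    · simp [pow_succ]; rw [← mul_assoc, mul_comm g.lin]

end AffMap

open AffMap in
theorem not_universal_of_point {L : Type} [Field L] [CharZero L] (H : Subgroup Lˣ)
    (htf : ∀ t : H, ∀ m : ℕ, 0 < m → t ^ m = 1 → t = 1)
    (hdiv : ∀ t : H, ∀ m : ℕ, 0 < m → ∃ s : H, s ^ m = t)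
    (w : List Bool) (hw : w.head? = some true) (x y : H)
    (hxy : aeval ![sc x, sc y] (wordPoly w) = 0) :
    ∃ (G : Type) (_ : Group G), UniquelyDivisible G ∧
      ∃ a b : G, ¬ ∃ x : G, wordEval w x a = b := by
  refine ⟨AffMap L H, inferInstance, uniquelyDivisible htf hdiv, ⟨0, y⟩,
    ⟨1, x ^ (w.count true) * y ^ (w.count false)⟩, ?_⟩
  rintro ⟨g, hg⟩
  have hn : 0 < w.count true := by
    rw [List.count_pos_iff]
    exact List.mem_of_mem_head? hw
  have h1 := congrArg AffMap.lin hg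
  rw [wordEval_lin] at h1
  have h2 : g.lin ^ w.count true = x ^ w.count true := mul_right_cancel h1
  have h3 : g.lin = x := by
    have := htf (g.lin * x⁻¹) _ hn (by rw [mul_pow, inv_pow, h2, mul_inv_cancel])
    exact mul_inv_eq_one.mp this
  have h4 := congrArg AffMap.tr hg
  rw [wordEval_tr _ _ _ rfl, h3] at h4
  simp [hxy] at h4

/-- Elements of `L` with torsion-free span give a failing equation. -/
theorem not_universal_of_pair {L : Type} [Field L] [CharZero L] [IsAlgClosed L]
    (w : List Bool) (hw : w.head? = some true) (x y : Lˣ)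
    (htf : ∀ (m n : ℤ) (k : ℕ), 0 < k → (x ^ m * y ^ n) ^ k = 1 → x ^ m * y ^ n = 1)
    (hxy : aeval ![(x : L), (y : L)] (wordPoly w) = 0) :
    ∃ (G : Type) (_ : Group G), UniquelyDivisible G ∧
      ∃ a b : G, ¬ ∃ x : G, wordEval w x a = b := by
  have hroot : ∀ (a : Lˣ) (m : ℕ), 0 < m → ∃ b : Lˣ, b ^ m = a := by
    intro a m hm
    obtain ⟨z, hz⟩ := IsAlgClosed.exists_pow_nat_eq (a : L) hm
    have hz0 : z ≠ 0 := by
      rintro rfl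
      rw [zero_pow hm.ne'] at hz
      exact a.ne_zero hz.symm
    exact ⟨Units.mk0 z hz0, Units.ext (by simpa using hz)⟩
  obtain ⟨H, hTH, h1, h2⟩ := exists_divisible_torsionFree (A := Additive Lˣ)
    (fun a m hm => hroot a.toMul m hm)
    (Subgroup.toAddSubgroup (Subgroup.closure {x, y}))
    (by
      intro t ht m hm h
      have ht' : t.toMul ∈ Subgroup.closure {x, y} := ht
      obtain ⟨i, j, hij⟩ := Subgroup.mem_closure_pair.mp ht'
      have h' : t.toMul ^ m = 1 := h
      rw [← hij] at h'
      have := htf i j m hm h'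
      rw [hij] at this
      exact this)
  let H' : Subgroup Lˣ := AddSubgroup.toSubgroup' H
  have hx : x ∈ H' := hTH (show x ∈ Subgroup.closure {x, y} from Subgroup.subset_closure (by simp))
  have hy : y ∈ H' := hTH (show y ∈ Subgroup.closure {x, y} from Subgroup.subset_closure (by simp))
  refine not_universal_of_point H' ?_ ?_ w hw ⟨x, hx⟩ ⟨y, hy⟩ hxy
  · rintro ⟨t, ht⟩ m hm h
    have := congrArg Subtype.val h
    exact Subtype.ext (h1 (Additive.ofMul t) ht m hm this)
  · rintro ⟨t, ht⟩ m hm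
    obtain ⟨b, hb, hbt⟩ := h2 (Additive.ofMul t) ht m hm
    exact ⟨⟨b.toMul, hb⟩, Subtype.ext hbt⟩

theorem wordPoly_sq_eval_zero (w : List Bool) (hw : w.head? = some true) :
    eval (0 : Fin 2 → ℂ) (map (Int.castRingHom ℂ)
      (aeval ![(X 0 : MvPolynomial (Fin 2) ℤ) ^ 2, X 1 ^ 2] (wordPoly w))) = 1 := by
  cases w with
  | nil => simp at hw
  | cons c w =>
    have : c = true := by simpa using hw
    subst this
    simp [wordPoly]

/-- A monomial relation modulo a real irreducible `F` has a real coefficient. -/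
theorem coeff_real (f : MvPolynomial (Fin 2) ℤ)
    (hirr : Irreducible (MvPolynomial.map (Int.castRingHom ℂ) f))
    (hX : ∀ i, ¬ MvPolynomial.map (Int.castRingHom ℂ) f ∣ X i)
    (a b a' b' : ℕ) (c : ℂ)
    (h : MvPolynomial.map (Int.castRingHom ℂ) f ∣
      X 0 ^ a * X 1 ^ b - C c * (X 0 ^ a' * X 1 ^ b')) : starRingEnd ℂ c = c := by
  set F := MvPolynomial.map (Int.castRingHom ℂ) f with hF
  have hp : Prime F := hirr.prime
  have hconj : MvPolynomial.map (starRingEnd ℂ) F = F := by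
    rw [hF, MvPolynomial.map_map]
    have e : (starRingEnd ℂ).comp (Int.castRingHom ℂ) = Int.castRingHom ℂ :=
      RingHom.ext_int _ _
    rw [e]
  have h' := map_dvd (MvPolynomial.map (starRingEnd ℂ)) h
  rw [hconj] at h'
  simp only [map_sub, map_mul, map_pow, map_X, map_C] at h'
  have h3 := dvd_sub h h'
  have e : (X 0 ^ a * X 1 ^ b - C c * (X 0 ^ a' * X 1 ^ b')) -
      (X 0 ^ a * X 1 ^ b - C (starRingEnd ℂ c) * (X 0 ^ a' * X 1 ^ b'))
      = C (starRingEnd ℂ c - c) * (X 0 ^ a' * X 1 ^ b' : MvPolynomial (Fin 2) ℂ) := by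
    rw [C_sub]; ring
  rw [e] at h3
  by_contra hne
  rcases hp.dvd_or_dvd h3 with h4 | h4
  · have hu : IsUnit (C (starRingEnd ℂ c - c) : MvPolynomial (Fin 2) ℂ) :=
      (IsUnit.mk0 _ (sub_ne_zero.mpr hne)).map C
    exact hp.not_isUnit (isUnit_of_dvd_unit h4 hu)
  · rcases hp.dvd_or_dvd h4 with h5 | h5
    · exact hX 0 (hp.dvd_of_dvd_pow h5)
    · exact hX 1 (hp.dvd_of_dvd_pow h5)

theorem map_wordPoly_sq {L : Type} [Field L] (φ : MvPolynomial (Fin 2) ℂ →+* L) (x y : L)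
    (hx : x = φ (X 0) ^ 2) (hy : y = φ (X 1) ^ 2) (v : List Bool) :
    φ (MvPolynomial.map (Int.castRingHom ℂ)
      (aeval ![(X 0 : MvPolynomial (Fin 2) ℤ) ^ 2, X 1 ^ 2] (wordPoly v))) =
      aeval ![x, y] (wordPoly v) := by
  subst hx hy
  induction v with
  | nil => simp [wordPoly]
  | cons c v ih =>
    cases c
    · simp only [wordPoly, map_mul, ih]
      simp
    · simp only [wordPoly, map_mul, map_add, map_one, ih]
      simp

theorem stmt3 (w : List Bool) (hw : w.head? = some true)
    (f : MvPolynomial (Fin 2) ℤ)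
    (hdvd : f ∣ aeval ![(X 0 : MvPolynomial (Fin 2) ℤ) ^ 2, X 1 ^ 2] (wordPoly w))
    (hirr : Irreducible (MvPolynomial.map (Int.castRingHom ℂ) f)) :
    ∃ (G : Type) (_ : Group G), UniquelyDivisible G ∧
      ∃ a b : G, ¬ ∃ x : G, wordEval w x a = b := by
  classical
  set F := MvPolynomial.map (Int.castRingHom ℂ) f with hF
  have hp : Prime F := hirr.prime
  have hFd : F ∣ MvPolynomial.map (Int.castRingHom ℂ)
      (aeval ![(X 0 : MvPolynomial (Fin 2) ℤ) ^ 2, X 1 ^ 2] (wordPoly w)) := map_dvd _ hdvd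
  have hX : ∀ i, ¬ F ∣ X i := by
    intro i hi
    have h1 : (X i : MvPolynomial (Fin 2) ℂ) ∣ F :=
      hirr.dvd_symm (MvPolynomial.X_prime (R := ℂ)).irreducible hi
    have h2 := map_dvd (eval (0 : Fin 2 → ℂ)) (h1.trans hFd)
    rw [wordPoly_sq_eval_zero w hw] at h2
    simp at h2
  let I : Ideal (MvPolynomial (Fin 2) ℂ) := Ideal.span {F}
  haveI hI : I.IsPrime := (Ideal.span_singleton_prime hp.ne_zero).mpr hp
  let R := MvPolynomial (Fin 2) ℂ ⧸ I
  let K := FractionRing R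
  let L := AlgebraicClosure K
  let φ : MvPolynomial (Fin 2) ℂ →+* L :=
    ((algebraMap K L).comp (algebraMap R K)).comp (Ideal.Quotient.mk I)
  have hφ : ∀ p, φ p = 0 ↔ F ∣ p := by
    intro p
    have hinj : Function.Injective ((algebraMap K L).comp (algebraMap R K)) :=
      (algebraMap K L).injective.comp (IsFractionRing.injective R K)
    rw [← Ideal.mem_span_singleton, ← Ideal.Quotient.eq_zero_iff_mem]
    exact map_eq_zero_iff _ hinj
  let ι : ℂ →+* L := φ.comp C
  haveI : CharZero L := charZero_of_injective_ringHom ι.injective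
  have hξ : ∀ i, φ (X i) ≠ 0 := fun i h => hX i ((hφ _).mp h)
  let ξ : Lˣ := Units.mk0 _ (hξ 0)
  let η : Lˣ := Units.mk0 _ (hξ 1)
  refine not_universal_of_pair (L := L) w hw (ξ ^ 2) (η ^ 2) ?_ ?_
  · intro m n k hk h
    set z : Lˣ := ξ ^ m * η ^ n with hz
    have hz2 : (ξ ^ 2) ^ m * (η ^ 2) ^ n = z ^ 2 := by
      rw [hz, mul_pow, ← zpow_natCast, ← zpow_natCast, ← zpow_natCast, ← zpow_natCast,
        ← zpow_mul, ← zpow_mul, ← zpow_mul, ← zpow_mul, mul_comm m, mul_comm n]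
    rw [hz2] at h ⊢
    rw [← pow_mul] at h
    have hk2 : 2 * k ≠ 0 := by omega
    have hprim : IsPrimitiveRoot (ι (Complex.exp (2 * Real.pi * Complex.I / ((2 * k : ℕ) : ℂ))))
        (2 * k) := (Complex.isPrimitiveRoot_exp (2 * k) hk2).map_of_injective ι.injective
    haveI : NeZero (2 * k) := ⟨hk2⟩
    obtain ⟨j, -, hj⟩ := hprim.eq_pow_of_pow_eq_one (ξ := (z : L))
      (by rw [← Units.val_pow_eq_pow_val, h, Units.val_one])
    rw [← map_pow] at hj
    set c : ℂ := Complex.exp (2 * Real.pi * Complex.I / ((2 * k : ℕ) : ℂ)) ^ j with hc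
    have hck : c ^ (2 * k) = 1 := by
      rw [hc, ← pow_mul, mul_comm j, pow_mul,
        (Complex.isPrimitiveRoot_exp (2 * k) hk2).pow_eq_one, one_pow]
    have hrel : ξ ^ m.toNat * η ^ n.toNat = z * (ξ ^ (-m).toNat * η ^ (-n).toNat) := by
      have em : m + ((-m).toNat : ℤ) = (m.toNat : ℤ) := by omega
      have en : n + ((-n).toNat : ℤ) = (n.toNat : ℤ) := by omega
      rw [hz, mul_mul_mul_comm, ← zpow_natCast ξ, ← zpow_natCast ξ, ← zpow_natCast η,
        ← zpow_natCast η, ← zpow_add, ← zpow_add, em, en]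
    have hrel' := congrArg (Units.val) hrel
    simp only [Units.val_mul, Units.val_pow_eq_pow_val] at hrel'
    rw [← hj] at hrel'
    have hreal : starRingEnd ℂ c = c := by
      refine coeff_real f hirr hX m.toNat n.toNat (-m).toNat (-n).toNat c ?_
      rw [← hF, ← hφ, map_sub, sub_eq_zero]
      simp only [map_mul, map_pow]
      exact hrel'
    have hnorm : ‖c‖ = 1 := Complex.norm_eq_one_of_pow_eq_one hck hk2
    have hc2 : c ^ 2 = 1 := by
      have := Complex.mul_conj c
      rw [hreal, Complex.normSq_eq_norm_sq, hnorm] at this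
      rw [sq, this]; simp
    apply Units.ext
    rw [Units.val_pow_eq_pow_val, ← hj, ← map_pow, hc2, map_one, Units.val_one]
  · have h0 := (hφ _).mpr hFd
    exact (map_wordPoly_sq φ _ _ (by simp [ξ]) (by simp [η]) w).symm.trans h0
end

section
/- Let m >= 0 and n >= 1 be integers, and let w = X A^{m+2n} X A^{m+n} X A^m X. Then P_w(x,y) factors as (1 + x y^{m+n}) * (1 + x(y^{m+2n} - y^{m+n}) + x^2 y^{2m+2n}), and the polynomial 1 + x^2 (y^{2m+4n} - y^{2m+2n}) + x^4 y^{4m+4n}, which is a factor of P_w(x^2,y^2) in Z[x,y], is irreducible in C[x,y]. -/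
open MvPolynomial

theorem wordPoly_replicate (k : ℕ) (w : List Bool) :
    wordPoly (List.replicate k false ++ w) = X 1 ^ k * wordPoly w := by
  induction k with
  | zero => simp
  | succ k ih =>
    rw [List.replicate_succ, List.cons_append, wordPoly, ih]
    ring

/-- Eisenstein step, in `ℂ[t][y]`. -/
theorem irr_eisenstein (n : ℕ) (hn : 1 ≤ n) :
    Irreducible (Polynomial.C (Polynomial.X ^ 2) * Polynomial.X ^ (2 * n) +
      Polynomial.C (Polynomial.X ^ 4 - Polynomial.X ^ 2 + 1) :
        Polynomial (Polynomial ℂ)) := by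
  obtain ⟨z, hz⟩ : ∃ z : ℂ, z ^ 4 - z ^ 2 + 1 = 0 := by
    have hd : (Polynomial.X ^ 4 - Polynomial.X ^ 2 + 1 : Polynomial ℂ).degree = 4 := by
      compute_degree!
    obtain ⟨z, hz⟩ := IsAlgClosed.exists_root
      (Polynomial.X ^ 4 - Polynomial.X ^ 2 + 1 : Polynomial ℂ) (by rw [hd]; norm_num)
    refine ⟨z, ?_⟩
    simpa [Polynomial.IsRoot] using hz
  have hdeg : (Polynomial.C (Polynomial.X ^ 2) * Polynomial.X ^ (2 * n) +
      Polynomial.C (Polynomial.X ^ 4 - Polynomial.X ^ 2 + 1) :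
        Polynomial (Polynomial ℂ)).natDegree = 2 * n := by
    rw [Polynomial.natDegree_add_C, Polynomial.natDegree_C_mul_X_pow]
    exact pow_ne_zero _ Polynomial.X_ne_zero
  have hne : (Polynomial.C (Polynomial.X ^ 2) * Polynomial.X ^ (2 * n) +
      Polynomial.C (Polynomial.X ^ 4 - Polynomial.X ^ 2 + 1) :
        Polynomial (Polynomial ℂ)) ≠ 0 := by
    intro h
    rw [h, Polynomial.natDegree_zero] at hdeg
    omega
  have hcoeff : ∀ k : ℕ, (Polynomial.C (Polynomial.X ^ 2) * Polynomial.X ^ (2 * n) +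
      Polynomial.C (Polynomial.X ^ 4 - Polynomial.X ^ 2 + 1) :
        Polynomial (Polynomial ℂ)).coeff k = (if k = 2 * n then Polynomial.X ^ 2 else 0) +
          (if k = 0 then Polynomial.X ^ 4 - Polynomial.X ^ 2 + 1 else 0) := by
    intro k
    rw [Polynomial.coeff_add, Polynomial.coeff_C_mul_X_pow, Polynomial.coeff_C]
  have hroot : (Polynomial.X - Polynomial.C z) ∣
      (Polynomial.X ^ 4 - Polynomial.X ^ 2 + 1 : Polynomial ℂ) := by
    rw [Polynomial.dvd_iff_isRoot]
    simpa [Polynomial.IsRoot] using hz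
  have h0 : (0 : ℕ) ≠ 2 * n := by omega
  refine Polynomial.irreducible_of_eisenstein_criterion
    (P := Ideal.span {Polynomial.X - Polynomial.C z}) ?_ ?_ ?_ ?_ ?_ ?_
  · rw [Ideal.span_singleton_prime (Polynomial.X_sub_C_ne_zero z)]
    exact Polynomial.prime_X_sub_C z
  · rw [Polynomial.leadingCoeff, hdeg, hcoeff, if_pos rfl, if_neg h0.symm, add_zero,
      Ideal.mem_span_singleton, Polynomial.dvd_iff_isRoot]
    intro h
    have h' : z = 0 := by simpa [Polynomial.IsRoot] using h
    rw [h'] at hz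
    norm_num at hz
  · intro k hk
    rw [Polynomial.degree_eq_natDegree hne, hdeg] at hk
    have hk' : k < 2 * n := by exact_mod_cast hk
    rw [hcoeff, if_neg hk'.ne, zero_add, Ideal.mem_span_singleton]
    split_ifs
    · exact hroot
    · exact dvd_zero _
  · rw [Polynomial.degree_eq_natDegree hne, hdeg]
    exact_mod_cast (by omega : 0 < 2 * n)
  · rw [hcoeff, if_neg h0, if_pos rfl, zero_add, Ideal.span_singleton_pow,
      Ideal.mem_span_singleton]
    rintro ⟨q, hq⟩
    have hd := congrArg (fun p => Polynomial.eval z (Polynomial.derivative p)) hq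
    simp [Polynomial.derivative_mul, Polynomial.derivative_pow] at hd
    have h1 : z * (2 * z ^ 2 - 1) = 0 := by linear_combination hd / 2
    rcases mul_eq_zero.mp h1 with h | h
    · rw [h] at hz
      norm_num at hz
    · have h3 : (3 : ℂ) = 0 := by
        linear_combination 4 * hz - (2 * z ^ 2 - 1) * h
      norm_num at h3
  · intro r hr
    rw [Polynomial.C_dvd_iff_dvd_coeff] at hr
    have e1 := hr (2 * n)
    have e2 := hr 0
    rw [hcoeff, if_pos rfl, if_neg h0.symm, add_zero] at e1
    rw [hcoeff, if_neg h0, if_pos rfl, zero_add] at e2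
    apply isUnit_of_dvd_one
    have : (1 : Polynomial ℂ) = (Polynomial.X ^ 4 - Polynomial.X ^ 2 + 1) -
      Polynomial.X ^ 2 * (Polynomial.X ^ 2 - 1) := by ring
    rw [this]
    exact dvd_sub e2 (e1.mul_right _)

/-- The swapped polynomial, in `ℂ[y][t]`. -/
theorem irr_swapped (n : ℕ) (hn : 1 ≤ n) :
    Irreducible (1 + Polynomial.X ^ 2 * Polynomial.C (Polynomial.X ^ (2 * n) - 1) +
      Polynomial.X ^ 4 : Polynomial (Polynomial ℂ)) := by
  rw [← MulEquiv.irreducible_iff (Polynomial.Bivariate.swap (R := ℂ))]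
  convert irr_eisenstein n hn using 1
  simp only [map_add, map_mul, map_pow, map_sub, map_one, Polynomial.Bivariate.swap_X,
    Polynomial.Bivariate.swap_Y]
  ring

theorem prim_of_coeff_zero {R : Type*} [CommRing R] (p : Polynomial R)
    (h : p.coeff 0 = 1) : p.IsPrimitive := by
  intro r hr
  rw [Polynomial.C_dvd_iff_dvd_coeff] at hr
  have := hr 0
  rw [h] at this
  exact isUnit_of_dvd_one this

theorem irr_scaled (k n : ℕ) (hn : 1 ≤ n) :
    Irreducible (1 + Polynomial.X ^ 2 *
        Polynomial.C (Polynomial.X ^ (2 * k) * (Polynomial.X ^ (2 * n) - 1)) +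
      Polynomial.X ^ 4 * Polynomial.C (Polynomial.X ^ (4 * k)) :
        Polynomial (Polynomial ℂ)) := by
  have hG := irr_swapped n hn
  rw [Polynomial.IsPrimitive.irreducible_iff_irreducible_map_fraction_map
    (K := FractionRing (Polynomial ℂ)) (prim_of_coeff_zero _ (by simp))] at hG
  rw [Polynomial.IsPrimitive.irreducible_iff_irreducible_map_fraction_map
    (K := FractionRing (Polynomial ℂ)) (prim_of_coeff_zero _ (by simp))]
  have ha : (algebraMap (Polynomial ℂ) (FractionRing (Polynomial ℂ))) (Polynomial.X ^ k) ≠ 0 := by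
    rw [Ne, FaithfulSMul.algebraMap_eq_zero_iff]
    exact pow_ne_zero _ Polynomial.X_ne_zero
  let _ := invertibleOfNonzero ha
  rw [← MulEquiv.irreducible_iff (Polynomial.algEquivCMulXAddC
    ((algebraMap (Polynomial ℂ) (FractionRing (Polynomial ℂ))) (Polynomial.X ^ k)) 0)] at hG
  convert hG using 1
  simp only [Polynomial.algEquivCMulXAddC_apply, Polynomial.map_sub, Polynomial.map_add, Polynomial.map_mul,
    Polynomial.map_pow, Polynomial.map_one, Polynomial.map_X, Polynomial.map_C, map_mul, map_pow,
    map_add, map_sub, map_one, map_zero, add_zero, Polynomial.aeval_X, Polynomial.aeval_C,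
    Polynomial.algebraMap_eq]
  ring

theorem irr_mv (m n : ℕ) (hn : 1 ≤ n) :
    Irreducible
      (1 + X 0 ^ 2 * (X 1 ^ (2 * m + 4 * n) - X 1 ^ (2 * m + 2 * n)) +
        X 0 ^ 4 * X 1 ^ (4 * m + 4 * n) : MvPolynomial (Fin 2) ℂ) := by
  rw [← MulEquiv.irreducible_iff (finSuccEquiv ℂ 1),
    ← MulEquiv.irreducible_iff (Polynomial.mapAlgEquiv (uniqueAlgEquiv ℂ (Fin 1)))]
  convert irr_scaled (m + n) n hn using 1
  have h1 : finSuccEquiv ℂ 1 (X 1) = Polynomial.C (X 0) := finSuccEquiv_X_succ (j := 0)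
  have h2 : uniqueAlgEquiv ℂ (Fin 1) (X 0) = Polynomial.X := by simp [uniqueAlgEquiv]
  have h3 : Polynomial.mapAlgEquiv (uniqueAlgEquiv ℂ (Fin 1)) Polynomial.X = Polynomial.X := by
    simp [Polynomial.mapAlgEquiv]
  have h4 : Polynomial.mapAlgEquiv (uniqueAlgEquiv ℂ (Fin 1)) (Polynomial.C (X 0)) =
      Polynomial.C Polynomial.X := by
    rw [← h2]
    simp [Polynomial.mapAlgEquiv]
  simp only [map_add, map_mul, map_pow, map_sub, map_one, finSuccEquiv_X_zero, h1, h3, h4]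
  ring

/-- For `m ≥ 0`, `n ≥ 1` and `w = X A^{m+2n} X A^{m+n} X A^m X`:
`P_w(x,y) = (1 + x y^{m+n})(1 + x(y^{m+2n} - y^{m+n}) + x² y^{2m+2n})`, the polynomial
`1 + x²(y^{2m+4n} - y^{2m+2n}) + x⁴ y^{4m+4n}` is a factor of `P_w(x², y²)` in `ℤ[x,y]`,
and that polynomial is irreducible in `ℂ[x,y]`. -/
theorem stmt5 (m n : ℕ) (hn : 1 ≤ n) :
    wordPoly (true :: (List.replicate (m + 2 * n) false ++
        true :: (List.replicate (m + n) false ++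
          true :: (List.replicate m false ++ [true])))) =
      (1 + X 0 * X 1 ^ (m + n)) *
        (1 + X 0 * (X 1 ^ (m + 2 * n) - X 1 ^ (m + n)) + X 0 ^ 2 * X 1 ^ (2 * m + 2 * n)) ∧
    (1 + X 0 ^ 2 * (X 1 ^ (2 * m + 4 * n) - X 1 ^ (2 * m + 2 * n)) +
        X 0 ^ 4 * X 1 ^ (4 * m + 4 * n) : MvPolynomial (Fin 2) ℤ) ∣
      aeval ![(X 0 : MvPolynomial (Fin 2) ℤ) ^ 2, X 1 ^ 2]
        (wordPoly (true :: (List.replicate (m + 2 * n) false ++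
          true :: (List.replicate (m + n) false ++
            true :: (List.replicate m false ++ [true]))))) ∧
    Irreducible
      (1 + X 0 ^ 2 * (X 1 ^ (2 * m + 4 * n) - X 1 ^ (2 * m + 2 * n)) +
        X 0 ^ 4 * X 1 ^ (4 * m + 4 * n) : MvPolynomial (Fin 2) ℂ) := by
  have hw : wordPoly (true :: (List.replicate (m + 2 * n) false ++
        true :: (List.replicate (m + n) false ++
          true :: (List.replicate m false ++ [true])))) =
      (1 + X 0 * X 1 ^ (m + n)) *
        (1 + X 0 * (X 1 ^ (m + 2 * n) - X 1 ^ (m + n)) + X 0 ^ 2 * X 1 ^ (2 * m + 2 * n)) := by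
    simp only [wordPoly, wordPoly_replicate]
    ring
  refine ⟨hw, ?_, irr_mv m n hn⟩
  rw [hw, map_mul]
  apply Dvd.dvd.mul_left
  apply dvd_of_eq
  simp only [map_add, map_mul, map_pow, map_sub, map_one, aeval_X, Matrix.cons_val_zero,
    Matrix.cons_val_one]
  ring
end

section
/- Let u and w be finite words in the alphabet {X,A}, each ending in the letter X, and let m and n be respectively the number of letters of w equal to A and to X. Let u o w denote the word obtained by replacing each occurrence of the letter X in u by the word w. Then P_{u o w}(x,y) = P_u(x^n y^m, y) * P_w(x,y) in Z[x,y]. -/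
open MvPolynomial

theorem wordPoly_append (v w : List Bool) :
    wordPoly (v ++ w) = wordPoly v +
      X 0 ^ (v.count true) * X 1 ^ (v.count false) * wordPoly w := by
  induction v with
  | nil => simp [wordPoly]
  | cons c v ih =>
    cases c
    · simp [wordPoly, ih, pow_succ]; ring
    · simp [wordPoly, ih, pow_succ]; ring

/-- If `u` and `w` are words ending in `X`, `m` (resp. `n`) is the number of letters of
`w` equal to `A` (resp. `X`), and `u ∘ w` is the word obtained by replacing each
occurrence of `X` in `u` by `w`, then `P_{u ∘ w}(x,y) = P_u(xⁿyᵐ, y) ⬝ P_w(x,y)`. -/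
theorem stmt12 (u w : List Bool) (hu : u.getLast? = some true)
    (hw : w.getLast? = some true) :
    wordPoly (u.flatMap fun c => if c then w else [false]) =
      aeval ![(X 0 : MvPolynomial (Fin 2) ℤ) ^ (w.count true) * X 1 ^ (w.count false), X 1]
        (wordPoly u) * wordPoly w := by
  clear hu hw
  induction u with
  | nil => simp [wordPoly]
  | cons c u ih =>
    rw [List.flatMap_cons, wordPoly_append, ih]
    cases c
    · simp [wordPoly]; ring
    · simp [wordPoly]; ring
end

section
/- Let w be a finite word in the alphabet {X,A} and let n be the number of letters in w equal to X. Let p be an odd prime such that q = (p-1)/2 is relatively prime to n, and let G_p be the group of 2x2 matrices over Z/pZ of the form [[a, c],[0,1]] where a is a nonzero quadratic residue mod p and c is arbitrary. If the equation P_w(x^2, y^2) = 0 has a solution (x,y) with both coordinates nonzero elements of Z/pZ, then there exist A, B in G_p such that the word equation w(X,A) = B has no solution X in G_p. -/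
open MvPolynomial

/-- Membership in the group `G_p` of `2 × 2` matrices `[[a, c], [0, 1]]` over `ℤ/pℤ`
where `a` is a nonzero quadratic residue mod `p` and `c` is arbitrary. -/
def MemGp {p : ℕ} (M : Matrix (Fin 2) (Fin 2) (ZMod p)) : Prop :=
  (∃ s : ZMod p, s ≠ 0 ∧ M 0 0 = s ^ 2) ∧ M 1 0 = 0 ∧ M 1 1 = 1



theorem wordEval_aux {p : ℕ} (w : List Bool) (u c v : ZMod p)
    (M : Matrix (Fin 2) (Fin 2) (ZMod p)) (h00 : M 0 0 = u) (h01 : M 0 1 = c)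
    (h10 : M 1 0 = 0) (h11 : M 1 1 = 1) :
    wordEval w M !![v, 0; 0, 1] =
      !![u ^ w.count true * v ^ w.count false, c * aeval ![u, v] (wordPoly w); 0, 1] := by
  have hM : M = !![u, c; 0, 1] := by
    ext i j
    fin_cases i <;> fin_cases j <;> simp [h00, h01, h10, h11]
  subst hM
  induction w with
  | nil => simp [wordEval, wordPoly, Matrix.one_fin_two]
  | cons b w ih =>
    have hc : wordEval (b :: w) !![u, c; 0, 1] !![v, 0; 0, 1] =
        (if b then !![u, c; 0, 1] else !![v, 0; 0, 1]) *
          wordEval w !![u, c; 0, 1] !![v, 0; 0, 1] := by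
      simp [wordEval]
    rw [hc, ih]
    cases b
    · simp [wordPoly, Matrix.mul_fin_two, pow_succ]
      constructor <;> ring
    · simp [wordPoly, Matrix.mul_fin_two, pow_succ]
      constructor <;> ring

/-- Let `w` be a word with `n` letters equal to `X`, and let `p` be an odd prime with
`q = (p-1)/2` coprime to `n`.  If `P_w(x², y²) = 0` has a solution with both coordinates
nonzero mod `p`, then there are `A, B ∈ G_p` such that `w(X, A) = B` has no solution
`X ∈ G_p`. -/
theorem stmt16 (p : ℕ) (hp : p.Prime) (hodd : Odd p) (w : List Bool)
    (hcop : Nat.Coprime ((p - 1) / 2) (w.count true))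
    (hsol : ∃ x y : ZMod p, x ≠ 0 ∧ y ≠ 0 ∧
      aeval ![x ^ 2, y ^ 2] (wordPoly w) = 0) :
    ∃ A B : Matrix (Fin 2) (Fin 2) (ZMod p), MemGp A ∧ MemGp B ∧
      ¬ ∃ X : Matrix (Fin 2) (Fin 2) (ZMod p), MemGp X ∧ wordEval w X A = B := by
  haveI : Fact p.Prime := ⟨hp⟩
  obtain ⟨x, y, hx, hy, hP⟩ := hsol
  refine ⟨!![y ^ 2, 0; 0, 1],
    !![(x ^ 2) ^ w.count true * (y ^ 2) ^ w.count false, 1; 0, 1],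
    ⟨⟨y, hy, by simp⟩, by simp, by simp⟩,
    ⟨⟨x ^ w.count true * y ^ w.count false,
      mul_ne_zero (pow_ne_zero _ hx) (pow_ne_zero _ hy), by simp; ring⟩, by simp, by simp⟩, ?_⟩
  rintro ⟨M, ⟨⟨s, hs, h00⟩, h10, h11⟩, hM⟩
  rw [wordEval_aux w (s ^ 2) (M 0 1) (y ^ 2) M h00 rfl h10 h11] at hM
  have e00 := congrFun (congrFun hM 0) 0
  have e01 := congrFun (congrFun hM 0) 1
  simp only [Matrix.of_apply, Matrix.cons_val_zero, Matrix.cons_val_one] at e00 e01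
  have hn : (s ^ 2) ^ w.count true = (x ^ 2) ^ w.count true :=
    mul_right_cancel₀ (pow_ne_zero _ (pow_ne_zero _ hy)) e00
  have ht1 : ((s / x) ^ 2) ^ w.count true = 1 := by
    rw [div_pow, div_pow, hn]
    exact div_self (pow_ne_zero _ (pow_ne_zero _ hx))
  have ht2 : ((s / x) ^ 2) ^ ((p - 1) / 2) = 1 := by
    rw [← pow_mul, Nat.mul_div_cancel' (by obtain ⟨k, hk⟩ := hodd; omega)]
    exact ZMod.pow_card_sub_one_eq_one (div_ne_zero hs hx)
  have ht : (s / x) ^ 2 = 1 := by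
    rw [← orderOf_eq_one_iff, ← Nat.dvd_one, ← hcop]
    exact Nat.dvd_gcd (orderOf_dvd_of_pow_eq_one ht2) (orderOf_dvd_of_pow_eq_one ht1)
  have hsx : s ^ 2 = x ^ 2 := by
    rw [div_pow, div_eq_one_iff_eq (pow_ne_zero _ hx)] at ht
    exact ht
  rw [hsx, hP, mul_zero] at e01
  exact zero_ne_one e01
end
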